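/- Let n be even and let r be odd with 1 ≤ r ≤ n-1. Then C(n, n/2) · C(n/2, (r-1)/2) · C(n/2, (r+1)/2) = C(n, r) · C(r, (r-1)/2) · C(n-r, (n-r+1)/2). (Both sides count the number of pairs (y,z) with y an (n/2)-subset of [n], z an r-subset of [n], and |y ∩ z| = (r-1)/2.) -/

import Mathlib

/-!
A pair `(y, z)` of subsets of `[n]` is the same as an ordered partition of `[n]` into the four
blocks `y ∩ z`, `y \ z`, `z \ y`, `(y ∪ z)ᶜ`. If these have sizes `a`, `b`, `c`, `d`, there are
`n! / (a! b! c! d!)` such pairs, whether one chooses `y` first or `z` first; the second order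
exchanges `b` and `c`. For `n = 2m` and `r = 2k + 1` the block sizes are `k`, `m - k`, `k + 1`,
`m - k - 1`.
-/

open scoped Nat

theorem add_choose_left_mul_factorial_mul_factorial (a b : ℕ) :
    (a + b).choose a * a ! * b ! = (a + b)! := by
  rw [Nat.choose_symm_add, Nat.add_choose_mul_factorial_mul_factorial]

theorem add_choose_mul_add_choose_mul_add_choose_mul_factorials (a b c d : ℕ) :
    (a + b + (c + d)).choose (a + b) * (a + b).choose a * (c + d).choose c *
      (a ! * b ! * (c ! * d !)) = (a + b + (c + d))! := by
  calc
    _ = (a + b + (c + d)).choose (a + b) * ((a + b).choose a * a ! * b !) *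
          ((c + d).choose c * c ! * d !) := by ring
    _ = (a + b + (c + d)).choose (a + b) * (a + b)! * (c + d)! := by
      simp only [add_choose_left_mul_factorial_mul_factorial]
    _ = (a + b + (c + d))! := add_choose_left_mul_factorial_mul_factorial _ _

theorem add_choose_mul_add_choose_mul_add_choose_comm (a b c d : ℕ) :
    (a + b + (c + d)).choose (a + b) * (a + b).choose a * (c + d).choose c =
      (a + c + (b + d)).choose (a + c) * (a + c).choose a * (b + d).choose b := by
  have factorials_pos : 0 < a ! * b ! * (c ! * d !) := by positivity
  apply Nat.eq_of_mul_eq_mul_right factorials_pos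
  calc
    _ = (a + b + (c + d))! := add_choose_mul_add_choose_mul_add_choose_mul_factorials a b c d
    _ = (a + c + (b + d))! := by rw [add_add_add_comm]
    _ = (a + c + (b + d)).choose (a + c) * (a + c).choose a * (b + d).choose b *
          (a ! * c ! * (b ! * d !)) :=
      (add_choose_mul_add_choose_mul_add_choose_mul_factorials a c b d).symm
    _ = _ := by rw [mul_mul_mul_comm (a !)]

/-- For `n` even and `r` odd with `1 ≤ r ≤ n-1`:
`C(n,n/2)·C(n/2,(r-1)/2)·C(n/2,(r+1)/2) = C(n,r)·C(r,(r-1)/2)·C(n-r,(n-r+1)/2)`.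
(Both sides count pairs `(y,z)` with `y ∈ [n]^(n/2)`, `z ∈ [n]^(r)`, `|y ∩ z| = (r-1)/2`.) -/
theorem stmt_11 (n r : ℕ) (hn : Even n) (hr : Odd r) (hr1 : 1 ≤ r) (hrn : r ≤ n - 1) :
    n.choose (n / 2) * (n / 2).choose ((r - 1) / 2) * (n / 2).choose ((r + 1) / 2)
      = n.choose r * r.choose ((r - 1) / 2) * (n - r).choose ((n - r + 1) / 2) := by
  obtain ⟨m, rfl⟩ := hn
  obtain ⟨k, rfl⟩ := hr
  obtain ⟨j, rfl⟩ : ∃ j, m = k + 1 + j := Nat.exists_eq_add_of_le (by omega)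
  have half_n : (k + 1 + j + (k + 1 + j)) / 2 = k + 1 + j := by omega
  have half_pred_r : (2 * k + 1 - 1) / 2 = k := by omega
  have half_succ_r : (2 * k + 1 + 1) / 2 = k + 1 := by omega
  have n_sub_r : k + 1 + j + (k + 1 + j) - (2 * k + 1) = j + 1 + j := by omega
  have half_succ_n_sub_r : (j + 1 + j + 1) / 2 = j + 1 := by omega
  rw [half_n, half_pred_r, half_succ_r, n_sub_r, half_succ_n_sub_r]
  convert add_choose_mul_add_choose_mul_add_choose_comm k (j + 1) (k + 1) j using 4 <;> omega
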